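/- arXiv:2401.00837 — 2 statements merged into one kernel-verified Lean document; each statement's English description precedes it below -/
import Mathlib

section
/- Let S ⊆ {-1,0,1}^d \ {0} be a mostly symmetric step set (symmetric over all but the d-th axis) that takes a step forwards and backwards in each coordinate. If S has zero drift (B(1) = A(1)), then the total weight s_n of walks of length n taking steps in S, starting at the origin, and never leaving ℕ^d satisfies s_n ∼ S(1)^n · n^{-d/2} · S(1)^{d/2} / (π^{d/2} · (b_1 ··· b_d)^{1/2}) as n → ∞. -/
open Finset Filter
open scoped Classical

noncomputable section

/-- Total weight of walks of length `n` with steps in `S` (weighted by `w`),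
starting at the origin and never leaving `ℕ^d`. -/
def walkWeight (d : ℕ) (S : Finset (Fin d → ℤ)) (w : (Fin d → ℤ) → ℝ) (n : ℕ) : ℝ :=
  ∑ f : Fin n → {i // i ∈ S},
    if ∀ m : ℕ, m ≤ n → ∀ j : Fin d,
        0 ≤ ∑ k ∈ Finset.univ.filter (fun k : Fin n => (k : ℕ) < m), ((f k : Fin d → ℤ) j)
    then ∏ k : Fin n, w (f k) else 0

/-- The step set `S` (with weights `w`) is symmetric over the `k`-th coordinate axis. -/
def SymmetricAxis (d : ℕ) (S : Finset (Fin d → ℤ)) (w : (Fin d → ℤ) → ℝ) (k : Fin d) : Prop :=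
  ∀ i ∈ S, Function.update i k (-(i k)) ∈ S ∧ w (Function.update i k (-(i k))) = w i

/-!
Given which steps move along each of the symmetric axes, and the whole path along the last axis, the
signs of the moves along the symmetric axes are independent fair coins. So the walk survives along
such an axis with probability `survival N 0 ∼ √(2 / (π N))`, where `N` is the number of moves along
it. By Hoeffding's inequality `N` is exponentially concentrated around `n r`, where
`r = 2 b_k / S(1)` is the probability that a step moves along the axis. Hence each symmetric axis
contributes an asymptotic factor `√(2 / (π r n))`, and these factors can be split off one at a time.
Survival along the last axis alone gives a factor of the same form, because zero drift makes the law
of its steps symmetric.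
-/

/-! ### Survival of the simple symmetric walk -/

/-- Probability that the simple symmetric walk on `ℤ` started at `h` is nonnegative at all times
`0, …, m`. -/
def survival : ℕ → ℤ → ℝ
  | 0, h => if 0 ≤ h then 1 else 0
  | m + 1, h => if 0 ≤ h then (survival m (h + 1) + survival m (h - 1)) / 2 else 0

/-- Probability that the simple symmetric walk on `ℤ` started at `0` is at `s` at time `m`. -/
def simpleWalkLaw : ℕ → ℤ → ℝ
  | 0, s => if s = 0 then 1 else 0
  | m + 1, s => (simpleWalkLaw m (s - 1) + simpleWalkLaw m (s + 1)) / 2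

lemma survival_of_neg (m : ℕ) {h : ℤ} (hh : h < 0) : survival m h = 0 := by
  cases m <;> simp [survival, not_le.mpr hh]

lemma survival_mem_Icc (m : ℕ) (h : ℤ) : survival m h ∈ Set.Icc (0 : ℝ) 1 := by
  induction m generalizing h with
  | zero => unfold survival; split_ifs <;> simp
  | succ m ih =>
    obtain ⟨hup, hup'⟩ := ih (h + 1)
    obtain ⟨hdn, hdn'⟩ := ih (h - 1)
    unfold survival
    split_ifs <;> constructor <;> linarith

lemma sum_Icc_add_one_right {M : Type*} [AddCommMonoid M] {a b : ℤ} (hab : a ≤ b + 1) (g : ℤ → M) :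
    ∑ s ∈ Icc a (b + 1), g s = ∑ s ∈ Icc a b, g s + g (b + 1) := by
  have hIcc : Icc a (b + 1) = insert (b + 1) (Icc a b) := by
    ext
    simp only [mem_Icc, mem_insert]
    omega
  rw [hIcc, sum_insert (by simp), add_comm]

lemma sum_Icc_add_right {M : Type*} [AddCommMonoid M] (a b c : ℤ) (g : ℤ → M) :
    ∑ s ∈ Icc a b, g (s + c) = ∑ s ∈ Icc (a + c) (b + c), g s := by
  rw [← map_add_right_Icc, sum_map]
  rfl

-- Reflection principle: paths from `h` to `s ≥ 0` that hit `-1` correspond to paths from `h` to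
-- `-2 - s`, so the survivors are counted by the endpoints whose displacement lies in `[-h, h + 1]`.
lemma survival_eq_sum_simpleWalkLaw (m : ℕ) {h : ℤ} (hh : -1 ≤ h) :
    survival m h = ∑ s ∈ Icc (-h) (h + 1), simpleWalkLaw m s := by
  induction m generalizing h with
  | zero =>
    simp only [survival, simpleWalkLaw, sum_ite_eq', mem_Icc]
    exact if_congr (by omega) rfl rfl
  | succ m ih =>
    obtain rfl | h0 : h = -1 ∨ 0 ≤ h := by omega
    · simp [survival]
    set u : ℤ → ℝ := simpleWalkLaw m
    have hshift_down : ∑ s ∈ Icc (-h) (h + 1), u (s - 1) = ∑ s ∈ Icc (-h - 1) h, u s := by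
      simpa [sub_eq_add_neg] using sum_Icc_add_right (-h) (h + 1) (-1) u
    have hshift_up : ∑ s ∈ Icc (-h) (h + 1), u (s + 1)
        = ∑ s ∈ Icc (-h + 1) h, u s + u (h + 1) + u (h + 1 + 1) := by
      rw [sum_Icc_add_right, sum_Icc_add_one_right (by omega), sum_Icc_add_one_right (by omega)]
    have hup : survival m (h + 1) = ∑ s ∈ Icc (-h - 1) h, u s + u (h + 1) + u (h + 1 + 1) := by
      rw [ih (by omega), sum_Icc_add_one_right (by omega), sum_Icc_add_one_right (by omega),
        show -(h + 1) = -h - 1 by ring]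
    have hdown : survival m (h - 1) = ∑ s ∈ Icc (-h + 1) h, u s := by
      rw [ih (by omega), show -(h - 1) = -h + 1 by ring, sub_add_cancel]
    simp only [survival, if_pos h0, simpleWalkLaw, ← sum_div, sum_add_distrib]
    rw [hup, hdown, hshift_down, hshift_up]
    ring

lemma survival_zero_right (m : ℕ) : survival m 0 = simpleWalkLaw m 0 + simpleWalkLaw m 1 := by
  rw [survival_eq_sum_simpleWalkLaw m (by norm_num), show Icc (-0 : ℤ) (0 + 1) = {0, 1} from rfl,
    sum_pair zero_ne_one]

lemma simpleWalkLaw_of_lt {m : ℕ} {s : ℤ} (hs : s < -m) : simpleWalkLaw m s = 0 := by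
  induction m generalizing s with
  | zero => exact if_neg (by simpa using hs.ne)
  | succ m ih =>
    push_cast at hs
    rw [simpleWalkLaw, ih (by omega), ih (by omega), add_zero, zero_div]

lemma simpleWalkLaw_of_odd {m : ℕ} {s : ℤ} (hs : Odd (s + m)) : simpleWalkLaw m s = 0 := by
  induction m generalizing s with
  | zero => exact if_neg (by rintro rfl; simp at hs)
  | succ m ih =>
    push_cast at hs
    rw [simpleWalkLaw, ih (by grind), ih (by grind), add_zero, zero_div]

lemma simpleWalkLaw_two_mul_sub (m j : ℕ) :
    simpleWalkLaw m (2 * j - m) = m.choose j / 2 ^ m := by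
  induction m generalizing j with
  | zero =>
    rcases j.eq_zero_or_pos with rfl | hj
    · simp [simpleWalkLaw]
    · simp [simpleWalkLaw, hj.ne', Nat.choose_eq_zero_of_lt hj]
  | succ m ih =>
    have hup : (2 * j - (m + 1 : ℕ) + 1 : ℤ) = 2 * j - m := by push_cast; ring
    rw [simpleWalkLaw, hup, ih]
    cases j with
    | zero =>
      rw [simpleWalkLaw_of_lt (by push_cast; omega), Nat.choose_zero_right, Nat.choose_zero_right,
        pow_succ]
      field_simp
      ring
    | succ j =>
      have hdown : (2 * (j + 1 : ℕ) - (m + 1 : ℕ) - 1 : ℤ) = 2 * j - m := by push_cast; ring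
      rw [hdown, ih, Nat.choose_succ_succ, pow_succ]
      push_cast
      field_simp

lemma survival_zero_eq_centralBinom (m : ℕ) :
    survival m 0 = ((m + 1) / 2).centralBinom / 4 ^ ((m + 1) / 2) := by
  rw [survival_zero_right, show (4 : ℝ) = 2 ^ 2 by norm_num, ← pow_mul]
  obtain ⟨n, rfl | rfl⟩ := Nat.even_or_odd' m
  · have hmid := simpleWalkLaw_two_mul_sub (2 * n) n
    rw [show (2 * n - (2 * n : ℕ) : ℤ) = 0 by push_cast; ring] at hmid
    rw [simpleWalkLaw_of_odd (s := 1) (by push_cast; grind), add_zero, hmid,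
      show (2 * n + 1) / 2 = n by omega, Nat.centralBinom]
  · have hmid := simpleWalkLaw_two_mul_sub (2 * n + 1) (n + 1)
    rw [show (2 * (n + 1 : ℕ) - (2 * n + 1 : ℕ) : ℤ) = 1 by push_cast; ring] at hmid
    have hchoose : (2 * n + 1 + 1).choose (n + 1) = 2 * (2 * n + 1).choose (n + 1) := by
      rw [Nat.choose_succ_succ, Nat.choose_symm_half]
      ring
    rw [simpleWalkLaw_of_odd (s := 0) (by push_cast; grind), zero_add, hmid,
      show (2 * n + 1 + 1) / 2 = n + 1 by omega, Nat.centralBinom,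
      show 2 * (n + 1) = 2 * n + 1 + 1 by ring, hchoose, pow_succ (2 : ℝ) (2 * n + 1)]
    push_cast
    field_simp

lemma tendsto_sqrt_mul_centralBinom_div_four_pow :
    Tendsto (fun n : ℕ => √(2 * n + 1) * (n.centralBinom / 4 ^ n)) atTop (nhds √(2 / Real.pi)) := by
  have hwallis := (Real.Wallis.tendsto_W_nhds_pi_div_two.inv₀ (by positivity)).sqrt
  rw [inv_div] at hwallis
  refine hwallis.congr fun n => ?_
  have hfactorial : (n.centralBinom : ℝ) = (2 * n).factorial / n.factorial ^ 2 := by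
    rw [Nat.centralBinom, Nat.cast_choose ℝ (by omega), show 2 * n - n = n by omega, sq]
  have hfour : (2 : ℝ) ^ (4 * n) = (4 ^ n) ^ 2 := by
    rw [← pow_mul, show (4 : ℝ) = 2 ^ 2 by norm_num, ← pow_mul]; congr 1; ring
  rw [Real.Wallis.W_eq_factorial_ratio, hfactorial, hfour,
    Real.sqrt_eq_iff_eq_sq (by positivity) (by positivity), mul_pow, Real.sq_sqrt (by positivity)]
  field_simp

lemma tendsto_natCast_div_two_mul_half_add_one :
    Tendsto (fun m : ℕ => (m : ℝ) / (2 * ((m + 1) / 2 : ℕ) + 1)) atTop (nhds 1) := by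
  have hsqueeze : Tendsto (fun m : ℕ => (m : ℝ) / (m + 2)) atTop (nhds 1) := by
    simpa using tendsto_natCast_div_add_atTop (2 : ℝ)
  refine tendsto_of_tendsto_of_tendsto_of_le_of_le hsqueeze tendsto_const_nhds (fun m => ?_)
    fun m => ?_
  · have : (2 * ((m + 1) / 2 : ℕ) + 1 : ℝ) ≤ m + 2 := by norm_cast; omega
    dsimp only
    gcongr
  · have : (m : ℝ) ≤ 2 * ((m + 1) / 2 : ℕ) + 1 := by norm_cast; omega
    exact div_le_one_of_le₀ this (by positivity)

lemma tendsto_sqrt_mul_survival_zero :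
    Tendsto (fun m : ℕ => √m * survival m 0) atTop (nhds √(2 / Real.pi)) := by
  have hhalf : Tendsto (fun m : ℕ => (m + 1) / 2) atTop atTop :=
    tendsto_atTop.mpr fun b => by filter_upwards [eventually_ge_atTop (2 * b)] with m hm; omega
  have hlim := tendsto_natCast_div_two_mul_half_add_one.sqrt.mul
    (tendsto_sqrt_mul_centralBinom_div_four_pow.comp hhalf)
  rw [Real.sqrt_one, one_mul] at hlim
  refine hlim.congr fun m => ?_
  have : √(2 * ((m + 1) / 2 : ℕ) + 1 : ℝ) ≠ 0 := by positivity
  rw [Function.comp_apply, survival_zero_eq_centralBinom, Real.sqrt_div (by positivity)]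
  field_simp

lemma tendsto_sqrt_mul_survival {α : Type*} {l : Filter α} {u v : α → ℕ} {r : ℝ} (hr : 0 < r)
    (hu : Tendsto u l atTop) (hv : Tendsto (fun t => (v t : ℝ) / u t) l (nhds r)) :
    Tendsto (fun t => √(u t) * survival (v t) 0) l (nhds √(2 / (Real.pi * r))) := by
  have hu' : Tendsto (fun t => (u t : ℝ)) l atTop := tendsto_natCast_atTop_atTop.comp hu
  have hv' : Tendsto v l atTop := by
    refine (tendsto_natCast_atTop_iff (R := ℝ)).mp ((hv.pos_mul_atTop hr hu').congr' ?_)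
    filter_upwards [hu'.eventually_gt_atTop 0] with t ht
    field_simp
  have hlim := (tendsto_sqrt_mul_survival_zero.comp hv').div hv.sqrt (by positivity)
  rw [← Real.sqrt_div (by positivity), div_div] at hlim
  refine hlim.congr' ?_
  filter_upwards [hu'.eventually_gt_atTop 0, hv'.eventually_gt_atTop 0] with t hut hvt
  have : √(u t) ≠ 0 := by positivity
  have : √(v t) ≠ 0 := by positivity
  simp only [Pi.div_apply, Function.comp_apply]
  rw [Real.sqrt_div (by positivity)]
  field_simp

lemma exists_abs_sqrt_mul_survival_sub_lt {r : ℝ} (hr : 0 < r) {δ : ℝ} (hδ : 0 < δ) :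
    ∃ ε > 0, ∀ᶠ n : ℕ in atTop, ∀ m : ℕ, |m - n * r| < n * ε →
      |√n * survival m 0 - √(2 / (Real.pi * r))| < δ := by
  set l : Filter (ℕ × ℕ) := comap Prod.fst atTop ⊓ comap (fun t => (t.2 : ℝ) / t.1) (nhds r)
  have hlim : Tendsto (fun t : ℕ × ℕ => √t.1 * survival t.2 0) l (nhds √(2 / (Real.pi * r))) :=
    tendsto_sqrt_mul_survival hr (tendsto_comap.mono_left inf_le_left)
      (tendsto_comap.mono_left inf_le_right)
  have hbasis := (atTop_basis.comap Prod.fst).inf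
    ((Metric.nhds_basis_ball (x := r)).comap fun t : ℕ × ℕ => (t.2 : ℝ) / t.1)
  obtain ⟨⟨N, ε⟩, ⟨-, hε⟩, hball⟩ := hbasis.eventually_iff.mp (Metric.tendsto_nhds.mp hlim δ hδ)
  refine ⟨ε, hε, ?_⟩
  filter_upwards [eventually_ge_atTop N, eventually_gt_atTop 0] with n hnN hn0 m hm
  have hn : (0 : ℝ) < n := by exact_mod_cast hn0
  refine hball (x := (n, m)) ⟨hnN, ?_⟩
  rw [Set.mem_preimage, Metric.mem_ball, Real.dist_eq, div_sub' hn.ne', abs_div, abs_of_pos hn,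
    div_lt_iff₀ hn, mul_comm ε]
  exact hm

/-! ### Expectations over paths of independent steps -/

section PathMean

variable {ι : Type*} [Fintype ι] {p : ι → ℝ} {n : ℕ}

/-- Sum of `F` over the paths of `n` steps, each step `i` weighted by `p i`. When `p` is a
probability vector this is the expectation of `F` over `n` independent steps of law `p`. -/
def pathMean (p : ι → ℝ) (n : ℕ) (F : (Fin n → ι) → ℝ) : ℝ :=
  ∑ f, (∏ m, p (f m)) * F f

lemma pathMean_succ (p : ι → ℝ) (n : ℕ) (F : (Fin (n + 1) → ι) → ℝ) :
    pathMean p (n + 1) F = ∑ i, p i * pathMean p n fun f => F (Fin.cons i f) := by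
  simp only [pathMean, mul_sum]
  rw [← (Fin.consEquiv fun _ => ι).sum_comp, Fintype.sum_prod_type]
  simp [Fin.consEquiv, Fin.prod_univ_succ, mul_assoc]

lemma sum_mul_pathMean (p : ι → ℝ) (n : ℕ) (F : ι → (Fin n → ι) → ℝ) :
    ∑ i, p i * pathMean p n (F i) = pathMean p n fun f => ∑ i, p i * F i f := by
  simp only [pathMean, mul_sum]
  rw [sum_comm]
  simp only [mul_left_comm]

lemma pathMean_const_mul (c : ℝ) (F : (Fin n → ι) → ℝ) :
    pathMean p n (fun f => c * F f) = c * pathMean p n F := by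
  simp only [pathMean, mul_sum, mul_left_comm c]

lemma pathMean_add (F G : (Fin n → ι) → ℝ) :
    pathMean p n (fun f => F f + G f) = pathMean p n F + pathMean p n G := by
  simp only [pathMean, mul_add, sum_add_distrib]

lemma pathMean_sub (F G : (Fin n → ι) → ℝ) :
    pathMean p n (fun f => F f - G f) = pathMean p n F - pathMean p n G := by
  simp only [pathMean, mul_sub, sum_sub_distrib]

lemma pathMean_mono (hp : ∀ i, 0 ≤ p i) {F G : (Fin n → ι) → ℝ} (h : ∀ f, F f ≤ G f) :
    pathMean p n F ≤ pathMean p n G :=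
  sum_le_sum fun f _ => mul_le_mul_of_nonneg_left (h f) (prod_nonneg fun m _ => hp (f m))

lemma abs_pathMean_le (hp : ∀ i, 0 ≤ p i) (F : (Fin n → ι) → ℝ) :
    |pathMean p n F| ≤ pathMean p n fun f => |F f| := by
  refine (abs_sum_le_sum_abs _ _).trans_eq (sum_congr rfl fun f _ => ?_)
  rw [abs_mul, abs_of_nonneg (prod_nonneg fun m _ => hp (f m))]

lemma pathMean_one (hp : p ∈ stdSimplex ℝ ι) : pathMean p n (fun _ => 1) = 1 := by
  simp only [pathMean, mul_one]
  rw [← Fintype.piFinset_univ, ← sum_pow', hp.2, one_pow]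

lemma pathMean_div_const (w : ι → ℝ) (T : ℝ) (F : (Fin n → ι) → ℝ) :
    pathMean (fun i => w i / T) n F = pathMean w n F / T ^ n := by
  simp only [pathMean, sum_div, prod_div_distrib, prod_const, card_univ, Fintype.card_fin,
    div_mul_eq_mul_div]

open MeasureTheory in
lemma pathMean_toReal_eq_integral [MeasurableSpace ι] [DiscreteMeasurableSpace ι] (q : PMF ι)
    (F : (Fin n → ι) → ℝ) :
    pathMean (fun i => (q i).toReal) n F = ∫ f, F f ∂Measure.pi fun _ => q.toMeasure := by
  rw [integral_fintype .of_finite]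
  refine sum_congr rfl fun f _ => ?_
  simp only [measureReal_def, Measure.pi_singleton, ENNReal.toReal_prod, smul_eq_mul,
    PMF.toMeasure_apply_singleton _ _ (MeasurableSet.singleton _)]

open MeasureTheory ProbabilityTheory in
lemma pathMean_indicator_le_exp (hp : p ∈ stdSimplex ℝ ι) {g : ι → ℝ} (hg : ∀ i, |g i| ≤ 1)
    (hmean : ∑ i, p i * g i = 0) {ε : ℝ} (hε : 0 ≤ ε) (n : ℕ) :
    pathMean p n (fun f => if n * ε ≤ ∑ m, g (f m) then 1 else 0)
      ≤ Real.exp (-(ε ^ 2 / 2)) ^ n := by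
  let _ : MeasurableSpace ι := ⊤
  have hsum : ∑ i, ENNReal.ofReal (p i) = 1 := by
    rw [← ENNReal.ofReal_sum_of_nonneg fun i _ => hp.1 i, hp.2, ENNReal.ofReal_one]
  let q : PMF ι := PMF.ofFintype (fun i => ENNReal.ofReal (p i)) hsum
  have hq : (fun i => (q i).toReal) = p := funext fun i => ENNReal.toReal_ofReal (hp.1 i)
  set P := Measure.pi fun _ : Fin n => q.toMeasure
  have hg_meas (m : Fin n) : Measurable fun f : Fin n → ι => g (f m) :=
    measurable_from_top.comp (measurable_pi_apply m)
  have hg_mean (m : Fin n) : ∫ f, g (f m) ∂P = 0 := by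
    rw [integral_comp_eval (μ := fun _ : Fin n => q.toMeasure) (f := g)
      measurable_from_top.aestronglyMeasurable, PMF.integral_eq_sum, ← hmean, ← hq]
    rfl
  have hg_subG (m : Fin n) :
      HasSubgaussianMGF (fun f : Fin n → ι => g (f m)) ((‖(1 : ℝ) - -1‖₊ / 2) ^ 2) P :=
    hasSubgaussianMGF_of_mem_Icc_of_integral_eq_zero (hg_meas m).aemeasurable
      (.of_forall fun f => abs_le.mp (hg (f m))) (hg_mean m)
  have hindep : iIndepFun (fun (m : Fin n) (f : Fin n → ι) => g (f m)) P :=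
    iIndepFun_pi fun _ => measurable_from_top.aemeasurable
  have hoeffding := HasSubgaussianMGF.measure_sum_ge_le_of_iIndepFun hindep
    (s := univ) (fun m _ => hg_subG m) (ε := n * ε) (by positivity)
  calc pathMean p n (fun f => if n * ε ≤ ∑ m, g (f m) then 1 else 0)
      = P.real {f | n * ε ≤ ∑ m, g (f m)} := by
        rw [← integral_indicator_one .of_discrete, ← hq, pathMean_toReal_eq_integral]
        rfl
    _ ≤ Real.exp (-(n * ε) ^ 2 / (2 * n)) := by
        refine hoeffding.trans_eq ?_
        norm_num
    _ = Real.exp (-(ε ^ 2 / 2)) ^ n := by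
        rw [← Real.exp_nat_mul]
        rcases n.eq_zero_or_pos with rfl | hn
        · simp
        · field_simp

end PathMean

/-! ### Conditioning on the moves -/

/-- The path started at `h` with increments `c` is nonnegative at all times `0, …, n`. -/
def StaysNonneg {n : ℕ} (h : ℤ) (c : Fin n → ℤ) : Prop :=
  ∀ m : ℕ, m ≤ n → 0 ≤ h + ∑ k ∈ univ.filter fun k : Fin n => (k : ℕ) < m, c k

/-- The indicator function of `StaysNonneg h`. -/
def stayIndicator {n : ℕ} (h : ℤ) (c : Fin n → ℤ) : ℝ :=
  if StaysNonneg h c then 1 else 0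

/-- The number of times a path with increments `c` moves. -/
def moveCount {n : ℕ} (c : Fin n → ℤ) : ℕ :=
  ∑ m, if c m = 0 then 0 else 1

lemma staysNonneg_succ {n : ℕ} (h : ℤ) (c : Fin (n + 1) → ℤ) :
    StaysNonneg h c ↔ 0 ≤ h ∧ StaysNonneg (h + c 0) (fun m => c m.succ) := by
  have hsum (m : ℕ) : h + ∑ k ∈ univ.filter fun k : Fin (n + 1) => (k : ℕ) < m + 1, c k
      = h + c 0 + ∑ k ∈ univ.filter fun k : Fin n => (k : ℕ) < m, c k.succ := by
    simp [sum_filter, Fin.sum_univ_succ, add_assoc]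
  constructor
  · exact fun H => ⟨by simpa using H 0 (by omega), fun m hm => hsum m ▸ H (m + 1) (by omega)⟩
  · rintro ⟨h0, H⟩ (_ | m) hm
    · simpa using h0
    · exact hsum m ▸ H m (by omega)

lemma stayIndicator_succ {n : ℕ} (h : ℤ) (c : Fin (n + 1) → ℤ) :
    stayIndicator h c = (if 0 ≤ h then 1 else 0) * stayIndicator (h + c 0) fun m => c m.succ := by
  simp only [stayIndicator, staysNonneg_succ, ite_and, ite_mul, one_mul, zero_mul]

lemma stayIndicator_mem_Icc {n : ℕ} (h : ℤ) (c : Fin n → ℤ) :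
    stayIndicator h c ∈ Set.Icc (0 : ℝ) 1 := by
  unfold stayIndicator; split_ifs <;> simp

lemma prod_stayIndicator_zero {κ : Type*} [Fintype κ] {n : ℕ} (c : Fin n → κ → ℤ) :
    ∏ j, stayIndicator 0 (fun m => c m j)
      = if ∀ m : ℕ, m ≤ n → ∀ j, 0 ≤ ∑ k ∈ univ.filter fun k : Fin n => (k : ℕ) < m, c k j
        then 1 else 0 := by
  simp only [stayIndicator, StaysNonneg, zero_add, Fintype.prod_ite_zero, prod_const_one]
  exact if_congr ⟨fun H m hm j => H j m hm, fun H j m hm => H m hm j⟩ rfl rfl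

lemma moveCount_succ {n : ℕ} (c : Fin (n + 1) → ℤ) :
    moveCount c = (if c 0 = 0 then 0 else 1) + moveCount fun m => c m.succ :=
  Fin.sum_univ_succ _

/-- `(φ(z) + φ(-z)) / 2`, the mean of `φ` once the sign of `z` is decided by a fair coin. -/
def evenPart (φ : ℤ → ℝ) (z : ℤ) : ℝ := (φ z + φ (-z)) / 2

lemma evenPart_survival {z : ℤ} (hz : z = -1 ∨ z = 0 ∨ z = 1) (h : ℤ) (N : ℕ) :
    evenPart (fun z => (if 0 ≤ h then 1 else 0) * survival N (h + z)) z
      = survival ((if z = 0 then 0 else 1) + N) h := by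
  rcases lt_or_ge h 0 with h0 | h0
  · simp [evenPart, survival_of_neg _ h0, h0.not_ge]
  · rcases hz with rfl | rfl | rfl <;>
      simp [evenPart, survival, h0, add_comm 1 N, sub_eq_add_neg, add_comm]

section FairSigns

variable {ι κ β : Type*} [Fintype ι] [Fintype κ] {p : ι → ℝ} {y : ι → β} {x : ι → κ → ℤ}

/-- Under the weights `p`, given the label `y` and all the absolute values `|x k|`, the signs of the
coordinates `x k` behave as independent fair coins. -/
def HasFairSigns (p : ι → ℝ) (y : ι → β) (x : ι → κ → ℤ) : Prop :=
  ∀ (H : β → ℝ) (φ : κ → ℤ → ℝ),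
    ∑ i, p i * (H (y i) * ∏ k, φ k (x i k)) = ∑ i, p i * (H (y i) * ∏ k, evenPart (φ k) (x i k))

lemma prod_update_apply [DecidableEq κ] {γ : Type*} (φ : κ → γ → ℝ) (k : κ) (ψ : γ → ℝ)
    (v : κ → γ) : ∏ j, Function.update φ k ψ j (v j) = ψ (v k) * ∏ j ∈ univ.erase k, φ j (v j) := by
  rw [← mul_prod_erase univ _ (mem_univ k), Function.update_self]
  congr 1
  exact prod_congr rfl fun j hj => by rw [Function.update_of_ne (ne_of_mem_erase hj)]

lemma sum_mul_prod_eq_sum_mul_prod_update_evenPart [DecidableEq κ] {k : κ} (σ : Equiv.Perm ι)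
    (hp : ∀ i, p (σ i) = p i) (hy : ∀ i, y (σ i) = y i)
    (hx : ∀ i, x (σ i) = Function.update (x i) k (-x i k)) (H : β → ℝ) (φ : κ → ℤ → ℝ) :
    ∑ i, p i * (H (y i) * ∏ j, φ j (x i j))
      = ∑ i, p i * (H (y i) * ∏ j, Function.update φ k (evenPart (φ k)) j (x i j)) := by
  set rest : ι → ℝ := fun i => p i * (H (y i) * ∏ j ∈ univ.erase k, φ j (x i j)) with hrest
  have hrest_σ (i : ι) : rest (σ i) = rest i := by
    simp only [hrest, hp, hy, hx]
    congr 2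
    exact prod_congr rfl fun j hj => by rw [Function.update_of_ne (ne_of_mem_erase hj)]
  have hreflect : ∑ i, rest i * φ k (-x i k) = ∑ i, rest i * φ k (x i k) := by
    rw [← Equiv.sum_comp σ fun i => rest i * φ k (x i k)]
    simp only [hrest_σ, hx, Function.update_self]
  calc ∑ i, p i * (H (y i) * ∏ j, φ j (x i j))
      = ∑ i, rest i * φ k (x i k) := sum_congr rfl fun i _ => by
        rw [← mul_prod_erase univ _ (mem_univ k)]; ring
    _ = ∑ i, rest i * evenPart (φ k) (x i k) := by
        simp only [evenPart, mul_div_assoc', mul_add, ← sum_div, sum_add_distrib]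
        rw [hreflect]
        ring
    _ = ∑ i, p i * (H (y i) * ∏ j, Function.update φ k (evenPart (φ k)) j (x i j)) :=
        sum_congr rfl fun i _ => by rw [prod_update_apply]; ring

lemma hasFairSigns_of_reflections [DecidableEq κ] (σ : κ → Equiv.Perm ι)
    (hp : ∀ k i, p (σ k i) = p i) (hy : ∀ k i, y (σ k i) = y i)
    (hx : ∀ k i, x (σ k i) = Function.update (x i) k (-x i k)) :
    HasFairSigns p y x := by
  intro H φ
  suffices ∀ K : Finset κ, ∑ i, p i * (H (y i) * ∏ k, φ k (x i k))
      = ∑ i, p i * (H (y i) * ∏ k, K.piecewise (fun k => evenPart (φ k)) φ k (x i k)) by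
    simpa using this univ
  intro K
  induction K using Finset.induction_on with
  | empty => simp
  | insert k K hk ih =>
    rw [ih, sum_mul_prod_eq_sum_mul_prod_update_evenPart (σ k) (hp k) (hy k) (hx k),
      piecewise_insert, piecewise_eq_of_notMem _ _ _ hk]

lemma hasFairSigns_of_sum_mul_eq_zero {u : ι → ℤ} (hu : ∀ i, u i = -1 ∨ u i = 0 ∨ u i = 1)
    (hdrift : ∑ i, p i * u i = 0) :
    HasFairSigns p (fun _ => ()) fun i (_ : Unit) => u i := by
  intro H φ
  simp only [univ_unique, prod_singleton, PUnit.default_eq_unit]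
  have hodd (i : ι) : φ () (u i) - evenPart (φ ()) (u i) = (φ () 1 - φ () (-1)) / 2 * u i := by
    rcases hu i with h | h | h <;> simp [h, evenPart] <;> ring
  rw [← sub_eq_zero, ← sum_sub_distrib]
  calc ∑ i, (p i * (H () * φ () (u i)) - p i * (H () * evenPart (φ ()) (u i)))
      = ∑ i, H () * ((φ () 1 - φ () (-1)) / 2) * (p i * u i) :=
        sum_congr rfl fun i _ => by linear_combination p i * H () * hodd i
    _ = 0 := by rw [← mul_sum, hdrift, mul_zero]

theorem HasFairSigns.pathMean_mul_prod_stayIndicator (hfair : HasFairSigns p y x)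
    (hx : ∀ i k, x i k = -1 ∨ x i k = 0 ∨ x i k = 1) {n : ℕ} (G : (Fin n → β) → ℝ) (h : κ → ℤ) :
    pathMean p n (fun f => G (fun m => y (f m)) * ∏ k, stayIndicator (h k) fun m => x (f m) k)
      = pathMean p n fun f => G (fun m => y (f m)) *
          ∏ k, survival (moveCount fun m => x (f m) k) (h k) := by
  induction n generalizing h with
  | zero => simp [stayIndicator, StaysNonneg, moveCount, survival]
  | succ n ih =>
    set start : κ → ℝ := fun k => if 0 ≤ h k then 1 else 0 with hstart
    set G' : (Fin n → ι) → β → ℝ := fun f b => G (Fin.cons b fun m => y (f m))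
    have hcons (i : ι) (f : Fin n → ι) : G (fun m => y ((Fin.cons i f : Fin (n + 1) → ι) m))
        = G' f (y i) := congrArg G <| funext <| Fin.cases rfl fun _ => rfl
    simp only [pathMean_succ, hcons, stayIndicator_succ, moveCount_succ, Fin.cons_zero,
      Fin.cons_succ]
    calc ∑ i, p i * pathMean p n (fun f => G' f (y i) *
            ∏ k, start k * stayIndicator (h k + x i k) fun m => x (f m) k)
        = ∑ i, p i * pathMean p n (fun f => G' f (y i) *
            ∏ k, start k * survival (moveCount fun m => x (f m) k) (h k + x i k)) :=
          sum_congr rfl fun i _ => by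
            have := ih (fun v => G (Fin.cons (y i) v) * ∏ k, start k) fun k => h k + x i k
            simpa only [prod_mul_distrib, mul_assoc] using congrArg (p i * ·) this
      _ = ∑ i, p i * pathMean p n (fun f => G' f (y i) *
            ∏ k, survival ((if x i k = 0 then 0 else 1) + moveCount fun m => x (f m) k) (h k)) := by
          simp only [sum_mul_pathMean]
          congr 1
          funext f
          rw [hfair (G' f) fun k z => start k * survival (moveCount fun m => x (f m) k) (h k + z)]
          simp only [hstart, evenPart_survival (hx _ _)]

end FairSigns

/-! ### Concentration of the number of moves -/

section MoveProb

variable {ι κ : Type*} [Fintype ι] {p : ι → ℝ} {u : ι → ℤ} {n : ℕ}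

/-- The total weight of the steps `i` that move along the coordinate `u`. -/
def moveProb (p : ι → ℝ) (u : ι → ℤ) : ℝ := ∑ i, p i * if u i = 0 then 0 else 1

lemma moveProb_mem_Icc (hp : p ∈ stdSimplex ℝ ι) (u : ι → ℤ) :
    moveProb p u ∈ Set.Icc (0 : ℝ) 1 := by
  refine ⟨sum_nonneg fun i _ => mul_nonneg (hp.1 i) (by split_ifs <;> simp), ?_⟩
  refine (sum_le_sum fun i _ => mul_le_of_le_one_right (hp.1 i) ?_).trans_eq hp.2
  split_ifs <;> simp

lemma pathMean_moveCount_deviation_le (hp : p ∈ stdSimplex ℝ ι) (u : ι → ℤ) {ε : ℝ} (hε : 0 ≤ ε)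
    (n : ℕ) :
    pathMean p n (fun f =>
        if n * ε ≤ |moveCount (fun m => u (f m)) - n * moveProb p u| then 1 else 0)
      ≤ 2 * Real.exp (-(ε ^ 2 / 2)) ^ n := by
  set g : ι → ℝ := fun i => (if u i = 0 then 0 else 1) - moveProb p u with hg
  have hg_abs (i : ι) : |g i| ≤ 1 := by
    obtain ⟨h0, h1⟩ := moveProb_mem_Icc hp u
    simp only [hg, abs_le]
    split_ifs <;> constructor <;> linarith
  have hg_mean : ∑ i, p i * g i = 0 := by
    simp only [hg, mul_sub, sum_sub_distrib, ← sum_mul, hp.2, one_mul]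
    exact sub_self _
  have hg_sum (f : Fin n → ι) :
      moveCount (fun m => u (f m)) - n * moveProb p u = ∑ m, g (f m) := by
    simp [hg, moveCount]
  have hunion (f : Fin n → ι) :
      (if n * ε ≤ |moveCount (fun m => u (f m)) - n * moveProb p u| then (1 : ℝ) else 0)
        ≤ (if n * ε ≤ ∑ m, g (f m) then 1 else 0) + if n * ε ≤ ∑ m, -g (f m) then 1 else 0 := by
    simp only [hg_sum, sum_neg_distrib, le_abs]
    split_ifs <;> norm_num
    tauto
  calc _ ≤ _ := pathMean_mono hp.1 hunion
    _ ≤ Real.exp (-(ε ^ 2 / 2)) ^ n + Real.exp (-(ε ^ 2 / 2)) ^ n := by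
      rw [pathMean_add]
      exact add_le_add (pathMean_indicator_le_exp hp hg_abs hg_mean hε n)
        (pathMean_indicator_le_exp hp (fun i => (abs_neg (g i)).trans_le (hg_abs i))
          (by simp only [mul_neg, sum_neg_distrib, hg_mean, neg_zero]) hε n)
    _ = _ := (two_mul _).symm

lemma tendsto_sqrt_pow_mul_pow_zero (j : ℕ) {ρ : ℝ} (h0 : 0 ≤ ρ) (h1 : ρ < 1) :
    Tendsto (fun n : ℕ => √(n : ℝ) ^ j * ρ ^ n) atTop (nhds 0) := by
  refine squeeze_zero (fun n => by positivity) (fun n => ?_)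
    (tendsto_pow_const_mul_const_pow_of_lt_one j h0 h1)
  have hsqrt : √(n : ℝ) ≤ n :=
    Real.sqrt_le_iff.mpr ⟨n.cast_nonneg, mod_cast Nat.le_self_pow two_ne_zero n⟩
  gcongr

lemma exists_abs_pathMean_mul_survival_sub_le (hp : p ∈ stdSimplex ℝ ι) (hu : 0 < moveProb p u)
    {δ : ℝ} (hδ : 0 < δ) :
    ∃ ρ : ℝ, 0 ≤ ρ ∧ ρ < 1 ∧ ∀ᶠ n : ℕ in atTop, ∀ A : (Fin n → ι) → ℝ,
      (∀ f, A f ∈ Set.Icc (0 : ℝ) 1) →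
        |√(n : ℝ) * pathMean p n (fun f => A f * survival (moveCount fun m => u (f m)) 0)
            - √(2 / (Real.pi * moveProb p u)) * pathMean p n A|
          ≤ δ * pathMean p n A + (√(n : ℝ) + √(2 / (Real.pi * moveProb p u))) * (2 * ρ ^ n) := by
  obtain ⟨ε, hε, hclose⟩ := exists_abs_sqrt_mul_survival_sub_lt hu hδ
  refine ⟨Real.exp (-(ε ^ 2 / 2)), (Real.exp_pos _).le, Real.exp_lt_one_iff.mpr (by nlinarith), ?_⟩
  filter_upwards [hclose] with n hclose A hA
  set L := √(2 / (Real.pi * moveProb p u))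
  have hpoint (f : Fin n → ι) :
      |√(n : ℝ) * (A f * survival (moveCount fun m => u (f m)) 0) - L * A f|
        ≤ δ * A f + (√(n : ℝ) + L) *
          if n * ε ≤ |moveCount (fun m => u (f m)) - n * moveProb p u| then 1 else 0 := by
    obtain ⟨hA0, hA1⟩ := hA f
    rw [show ∀ s : ℝ, √(n : ℝ) * (A f * s) - L * A f = A f * (√(n : ℝ) * s - L) by intros; ring,
      abs_mul, abs_of_nonneg hA0]
    split_ifs with hbad
    · obtain ⟨hs0, hs1⟩ := survival_mem_Icc (moveCount fun m => u (f m)) 0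
      have hn := Real.sqrt_nonneg (n : ℝ)
      have hL : 0 ≤ L := Real.sqrt_nonneg _
      have herr : |√(n : ℝ) * survival (moveCount fun m => u (f m)) 0 - L| ≤ √(n : ℝ) + L :=
        abs_le.mpr ⟨by nlinarith, by nlinarith⟩
      nlinarith [abs_nonneg (√(n : ℝ) * survival (moveCount fun m => u (f m)) 0 - L)]
    · nlinarith [hclose _ (not_le.mp hbad)]
  rw [← pathMean_const_mul, ← pathMean_const_mul, ← pathMean_sub]
  calc _ ≤ _ := (abs_pathMean_le hp.1 _).trans (pathMean_mono hp.1 hpoint)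
    _ ≤ _ := by
      rw [pathMean_add, pathMean_const_mul, pathMean_const_mul]
      gcongr
      exact pathMean_moveCount_deviation_le hp u hε.le n

lemma tendsto_pathMean_mul_survival (hp : p ∈ stdSimplex ℝ ι) (hu : 0 < moveProb p u)
    {A : (n : ℕ) → (Fin n → ι) → ℝ} (hA : ∀ n f, A n f ∈ Set.Icc (0 : ℝ) 1) {j : ℕ} {a : ℝ}
    (hlim : Tendsto (fun n : ℕ => √(n : ℝ) ^ j * pathMean p n (A n)) atTop (nhds a)) :
    Tendsto (fun n : ℕ => √(n : ℝ) ^ (j + 1) *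
        pathMean p n fun f => A n f * survival (moveCount fun m => u (f m)) 0)
      atTop (nhds (a * √(2 / (Real.pi * moveProb p u)))) := by
  set L := √(2 / (Real.pi * moveProb p u))
  rw [← add_zero (a * L)]
  refine Tendsto.congr (fun n => add_sub_cancel _ _) ((hlim.mul_const L).add ?_)
  refine Metric.tendsto_nhds.mpr fun η hη => ?_
  have hδ : η / (|a| + 1) * a < η := by
    rw [div_mul_eq_mul_div, div_lt_iff₀ (by positivity)]
    nlinarith [le_abs_self a]
  obtain ⟨ρ, hρ0, hρ1, herr⟩ := exists_abs_pathMean_mul_survival_sub_le hp hu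
    (δ := η / (|a| + 1)) (by positivity)
  have hbound : Tendsto (fun n : ℕ => η / (|a| + 1) * (√(n : ℝ) ^ j * pathMean p n (A n)) +
      2 * (√(n : ℝ) ^ (j + 1) * ρ ^ n + L * (√(n : ℝ) ^ j * ρ ^ n)))
      atTop (nhds (η / (|a| + 1) * a + 2 * (0 + L * 0))) :=
    (hlim.const_mul _).add (((tendsto_sqrt_pow_mul_pow_zero (j + 1) hρ0 hρ1).add
      ((tendsto_sqrt_pow_mul_pow_zero j hρ0 hρ1).const_mul L)).const_mul 2)
  filter_upwards [herr, hbound.eventually_lt_const (by simpa using hδ)] with n herr hsmall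
  rw [Real.dist_0_eq_abs]
  refine lt_of_le_of_lt ?_ hsmall
  have hpow : 0 ≤ √(n : ℝ) ^ j := by positivity
  calc _ = √(n : ℝ) ^ j * |√(n : ℝ) * pathMean p n (fun f =>
            A n f * survival (moveCount fun m => u (f m)) 0) - L * pathMean p n (A n)| := by
        rw [← abs_of_nonneg hpow, ← abs_mul, abs_of_nonneg hpow]
        ring_nf
    _ ≤ √(n : ℝ) ^ j * _ := mul_le_mul_of_nonneg_left (herr (A n) (hA n)) hpow
    _ = _ := by ring

lemma tendsto_pathMean_mul_prod_survival (hp : p ∈ stdSimplex ℝ ι) {x : ι → κ → ℤ}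
    (hx : ∀ k, 0 < moveProb p (x · k)) {A : (n : ℕ) → (Fin n → ι) → ℝ}
    (hA : ∀ n f, A n f ∈ Set.Icc (0 : ℝ) 1) {j : ℕ} {a : ℝ}
    (hlim : Tendsto (fun n : ℕ => √(n : ℝ) ^ j * pathMean p n (A n)) atTop (nhds a))
    (K : Finset κ) :
    Tendsto (fun n : ℕ => √(n : ℝ) ^ (j + #K) *
        pathMean p n fun f => A n f * ∏ k ∈ K, survival (moveCount fun m => x (f m) k) 0)
      atTop (nhds (a * ∏ k ∈ K, √(2 / (Real.pi * moveProb p (x · k))))) := by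
  induction K using Finset.induction_on with
  | empty => simpa using hlim
  | insert k K hk ih =>
    have hA' (n : ℕ) (f : Fin n → ι) :
        A n f * ∏ k ∈ K, survival (moveCount fun m => x (f m) k) 0 ∈ Set.Icc (0 : ℝ) 1 :=
      unitInterval.mul_mem (hA n f)
        (unitInterval.prod_mem fun _ _ => survival_mem_Icc _ _)
    simpa only [card_insert_of_notMem hk, prod_insert hk, add_assoc, mul_assoc,
      mul_comm (∏ k ∈ K, _)] using tendsto_pathMean_mul_survival hp (hx k) hA' ih

lemma moveProb_eq_two_mul (hu : ∀ i, u i = -1 ∨ u i = 0 ∨ u i = 1)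
    (hdrift : ∑ i, p i * u i = 0) : moveProb p u = 2 * ∑ i, p i * if u i = 1 then 1 else 0 := by
  have habs (i : ι) : (if u i = 0 then 0 else 1 : ℝ) = 2 * (if u i = 1 then 1 else 0) - u i := by
    rcases hu i with h | h | h <;> norm_num [h]
  simp only [moveProb, habs, mul_sub, sum_sub_distrib, hdrift, sub_zero, mul_sum, mul_left_comm]

end MoveProb

theorem tendsto_pathMean_orthant {ι κ : Type*} [Fintype ι] [Fintype κ] {p : ι → ℝ}
    (hp : p ∈ stdSimplex ℝ ι) {y : ι → ℤ} (hy : ∀ i, y i = -1 ∨ y i = 0 ∨ y i = 1)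
    (hdrift : ∑ i, p i * y i = 0) (hmove_y : 0 < moveProb p y) {x : ι → κ → ℤ}
    (hx : ∀ i k, x i k = -1 ∨ x i k = 0 ∨ x i k = 1) (hfair : HasFairSigns p y x)
    (hmove_x : ∀ k, 0 < moveProb p (x · k)) :
    Tendsto (fun n : ℕ => √(n : ℝ) ^ (Fintype.card κ + 1) * pathMean p n fun f =>
        stayIndicator 0 (fun m => y (f m)) * ∏ k, stayIndicator 0 fun m => x (f m) k)
      atTop (nhds (√(2 / (Real.pi * moveProb p y)) *
        ∏ k, √(2 / (Real.pi * moveProb p (x · k))))) := by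
  have hone : Tendsto (fun n : ℕ => √(n : ℝ) ^ 0 * pathMean p n fun _ => 1) atTop (nhds 1) := by
    simp only [pow_zero, one_mul, pathMean_one hp]
    exact tendsto_const_nhds
  have hlast : Tendsto (fun n : ℕ => √(n : ℝ) ^ 1 *
      pathMean p n fun f => stayIndicator 0 fun m => y (f m))
      atTop (nhds √(2 / (Real.pi * moveProb p y))) := by
    refine (by simpa using tendsto_pathMean_mul_survival hp hmove_y (fun _ _ => by simp) hone :
      Tendsto _ _ _).congr fun n => ?_
    have := (hasFairSigns_of_sum_mul_eq_zero hy hdrift).pathMean_mul_prod_stayIndicator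
      (fun i _ => hy i) (n := n) (fun _ => 1) fun _ => 0
    simpa using congrArg (√(n : ℝ) * ·) this.symm
  refine (tendsto_pathMean_mul_prod_survival hp hmove_x
    (fun _ _ => stayIndicator_mem_Icc _ _) hlast univ).congr fun n => ?_
  rw [card_univ, add_comm, hfair.pathMean_mul_prod_stayIndicator hx
    (fun v => stayIndicator 0 v) fun _ => 0]

/-! ### Step sets -/

section StepSet

variable {d : ℕ} {S : Finset (Fin d → ℤ)} {w : (Fin d → ℤ) → ℝ} {k : Fin d}

/-- The involution of a symmetric step set that changes the sign of the `k`-th coordinate. -/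
def SymmetricAxis.reflection (h : SymmetricAxis d S w k) : Equiv.Perm {i // i ∈ S} :=
  Function.Involutive.toPerm (fun i => ⟨Function.update i k (-i.1 k), (h i i.2).1⟩) fun i => by
    simp

lemma SymmetricAxis.coe_reflection_apply (h : SymmetricAxis d S w k) (i : {i // i ∈ S}) :
    (h.reflection i).1 = Function.update i.1 k (-i.1 k) := rfl

lemma SymmetricAxis.sum_mul_eq_zero (h : SymmetricAxis d S w k) :
    ∑ i : {i // i ∈ S}, w i * (i.1 k : ℝ) = 0 := by
  have hneg : ∑ i : {i // i ∈ S}, w i * (i.1 k : ℝ)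
      = ∑ i : {i // i ∈ S}, -(w i * (i.1 k : ℝ)) := by
    rw [← Equiv.sum_comp h.reflection]
    refine sum_congr rfl fun i _ => ?_
    rw [h.coe_reflection_apply, (h i i.2).2, Function.update_self, Int.cast_neg, mul_neg]
  rw [sum_neg_distrib] at hneg
  linarith

lemma sum_pos_of_sum_filter_pos (hw : ∀ i ∈ S, 0 ≤ w i) (hb : 0 < ∑ i ∈ S with i k = 1, w i) :
    0 < ∑ i ∈ S, w i :=
  hb.trans_le (sum_le_sum_of_subset_of_nonneg (filter_subset _ _) fun i hi _ => hw i hi)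

lemma sum_mul_eq_zero_of_sum_filter_eq (hstep : ∀ i ∈ S, i k = -1 ∨ i k = 0 ∨ i k = 1)
    (hdrift : ∑ i ∈ S with i k = -1, w i = ∑ i ∈ S with i k = 1, w i) :
    ∑ i : {i // i ∈ S}, w i * (i.1 k : ℝ) = 0 := by
  rw [← sub_eq_zero, sum_filter, sum_filter, ← sum_sub_distrib] at hdrift
  rw [univ_eq_attach, sum_attach S fun i => w i * (i k : ℝ), ← neg_eq_zero, ← sum_neg_distrib,
    ← hdrift]
  refine sum_congr rfl fun i hi => ?_
  rcases hstep i hi with h | h | h <;> norm_num [h]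

lemma moveProb_div_eq (hstep : ∀ i ∈ S, i k = -1 ∨ i k = 0 ∨ i k = 1)
    (hdrift : ∑ i : {i // i ∈ S}, w i * (i.1 k : ℝ) = 0) (T : ℝ) :
    moveProb (fun i : {i // i ∈ S} => w i / T) (fun i => i.1 k)
      = 2 * ((∑ i ∈ S with i k = 1, w i) / T) := by
  rw [moveProb_eq_two_mul (u := fun i : {i // i ∈ S} => i.1 k) fun i => hstep i i.2]
  · simp only [mul_boole]
    rw [univ_eq_attach, sum_attach S fun i => if i k = 1 then w i / T else 0, ← sum_filter, sum_div]
  · simp only [div_mul_eq_mul_div, ← sum_div, hdrift, zero_div]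

lemma walkWeight_eq_pathMean (n : ℕ) :
    walkWeight d S w n = pathMean (fun i : {i // i ∈ S} => w i) n fun f =>
      ∏ j, stayIndicator 0 fun m => (f m).1 j := by
  simp only [walkWeight, pathMean]
  refine sum_congr rfl fun f _ => ?_
  rw [prod_stayIndicator_zero fun m => (f m).1, mul_ite, mul_one, mul_zero]
  split_ifs <;> rfl

end StepSet

section MostlySymmetric

variable {d : ℕ} {S : Finset (Fin (d + 1) → ℤ)} {w : (Fin (d + 1) → ℤ) → ℝ}

lemma hasFairSigns_of_symmetricAxis (hsym : ∀ k : Fin d, SymmetricAxis (d + 1) S w k.castSucc)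
    (T : ℝ) :
    HasFairSigns (fun i : {i // i ∈ S} => w i / T) (fun i => i.1 (Fin.last d))
      fun i (k : Fin d) => i.1 k.castSucc :=
  hasFairSigns_of_reflections (fun k => (hsym k).reflection)
    (fun k i => congrArg (· / T) (hsym k i i.2).2)
    (fun k _ => Function.update_of_ne (Fin.castSucc_lt_last k).ne' _ _)
    fun k i => Function.update_comp_eq_of_injective i.1 (Fin.castSucc_injective d) k _

theorem tendsto_sqrt_pow_mul_walkWeight
    (hstep : ∀ i ∈ S, ∀ j, i j = -1 ∨ i j = 0 ∨ i j = 1) (hw : ∀ i ∈ S, 0 ≤ w i)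
    (hsym : ∀ k : Fin d, SymmetricAxis (d + 1) S w k.castSucc)
    (hb : ∀ k, 0 < ∑ i ∈ S with i k = 1, w i)
    (hdrift : ∑ i ∈ S with i (Fin.last d) = -1, w i = ∑ i ∈ S with i (Fin.last d) = 1, w i) :
    Tendsto (fun n : ℕ => √(n : ℝ) ^ (d + 1) * (walkWeight (d + 1) S w n / (∑ i ∈ S, w i) ^ n))
      atTop (nhds (∏ k, √((∑ i ∈ S, w i) / (Real.pi * ∑ i ∈ S with i k = 1, w i)))) := by
  set T := ∑ i ∈ S, w i
  have hT_pos : 0 < T := sum_pos_of_sum_filter_pos hw (hb 0)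
  set p : {i // i ∈ S} → ℝ := fun i => w i / T with hp_def
  have hp : p ∈ stdSimplex ℝ {i // i ∈ S} := by
    refine ⟨fun i => div_nonneg (hw i i.2) hT_pos.le, ?_⟩
    rw [← sum_div, univ_eq_attach, sum_attach S w, div_self hT_pos.ne']
  have hdrift' (k : Fin (d + 1)) : ∑ i : {i // i ∈ S}, w i * (i.1 k : ℝ) = 0 :=
    Fin.lastCases (sum_mul_eq_zero_of_sum_filter_eq (fun i hi => hstep i hi _) hdrift)
      (fun k => (hsym k).sum_mul_eq_zero) k
  have hmove (k : Fin (d + 1)) :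
      moveProb p (fun i => i.1 k) = 2 * ((∑ i ∈ S with i k = 1, w i) / T) :=
    moveProb_div_eq (fun i hi => hstep i hi k) (hdrift' k) T
  have hmove_pos (k : Fin (d + 1)) : 0 < moveProb p fun i => i.1 k := by
    rw [hmove]
    exact mul_pos two_pos (div_pos (hb k) hT_pos)
  have hmean (n : ℕ) : walkWeight (d + 1) S w n / T ^ n = pathMean p n fun f =>
      stayIndicator 0 (fun m => (f m).1 (Fin.last d)) *
        ∏ k : Fin d, stayIndicator 0 fun m => (f m).1 k.castSucc := by
    simp only [walkWeight_eq_pathMean, hp_def, pathMean_div_const, Fin.prod_univ_castSucc, mul_comm]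
  have hlim := tendsto_pathMean_orthant hp (fun i => hstep i i.2 _)
    (by simp only [hp_def, div_mul_eq_mul_div, ← sum_div, hdrift', zero_div])
    (hmove_pos (Fin.last d)) (fun i k => hstep i i.2 (Fin.castSucc k))
    (hasFairSigns_of_symmetricAxis hsym T) fun k => hmove_pos k.castSucc
  rw [Fintype.card_fin, mul_comm,
    ← Fin.prod_univ_castSucc fun k => √(2 / (Real.pi * moveProb p fun i => i.1 k))] at hlim
  have hratio (k : Fin (d + 1)) : T / (Real.pi * ∑ i ∈ S with i k = 1, w i)
      = 2 / (Real.pi * moveProb p fun i => i.1 k) := by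
    rw [hmove]
    field_simp
  simpa only [hmean, hratio] using hlim

lemma prod_sqrt_div_mul {n : ℕ} {s t : ℝ} (hs : 0 ≤ s) (ht : 0 ≤ t) {b : Fin n → ℝ}
    (hb : ∀ k, 0 ≤ b k) :
    ∏ k, √(s / (t * b k)) = s ^ ((n : ℝ) / 2) / (t ^ ((n : ℝ) / 2) * √(∏ k, b k)) := by
  simp only [Real.sqrt_div hs, Real.sqrt_mul ht, Real.sqrt_prod univ fun k _ => hb k,
    Real.rpow_div_two_eq_sqrt _ hs, Real.rpow_div_two_eq_sqrt _ ht, Real.rpow_natCast,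
    prod_div_distrib, prod_mul_distrib, prod_const, card_univ, Fintype.card_fin]

theorem mostly_symmetric_zero_drift_asymptotics_general
    (hstep : ∀ i ∈ S, ∀ j, i j = -1 ∨ i j = 0 ∨ i j = 1) (hw : ∀ i ∈ S, 0 ≤ w i)
    (hsym : ∀ k : Fin d, SymmetricAxis (d + 1) S w k.castSucc)
    (hb : ∀ k, 0 < ∑ i ∈ S with i k = 1, w i)
    (hdrift : ∑ i ∈ S with i (Fin.last d) = -1, w i = ∑ i ∈ S with i (Fin.last d) = 1, w i) :
    Tendsto (fun n : ℕ =>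
      walkWeight (d + 1) S w n /
        ((∑ i ∈ S, w i) ^ n * (n : ℝ) ^ (-((d : ℝ) + 1) / 2) *
          ((∑ i ∈ S, w i) ^ (((d : ℝ) + 1) / 2) /
            (Real.pi ^ (((d : ℝ) + 1) / 2) * √(∏ k, ∑ i ∈ S with i k = 1, w i)))))
      atTop (nhds 1) := by
  have hT_pos : 0 < ∑ i ∈ S, w i := sum_pos_of_sum_filter_pos hw (hb 0)
  set c := ∏ k, √((∑ i ∈ S, w i) / (Real.pi * ∑ i ∈ S with i k = 1, w i)) with hc
  have hc_pos : 0 < c :=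
    prod_pos fun k _ => Real.sqrt_pos.mpr (div_pos hT_pos (mul_pos Real.pi_pos (hb k)))
  rw [prod_sqrt_div_mul hT_pos.le Real.pi_pos.le fun k => (hb k).le, Nat.cast_add_one] at hc
  have hlim := (tendsto_sqrt_pow_mul_walkWeight hstep hw hsym hb hdrift).div_const c
  rw [div_self hc_pos.ne'] at hlim
  rw [← hc]
  refine hlim.congr fun n => ?_
  rw [neg_div, Real.rpow_neg n.cast_nonneg, Real.rpow_div_two_eq_sqrt _ n.cast_nonneg,
    ← Nat.cast_add_one, Real.rpow_natCast, div_mul_eq_div_div, div_mul_eq_div_div, div_inv_eq_mul,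
    mul_comm (_ / _)]

end MostlySymmetric

/-- Zero drift asymptotics for a mostly symmetric step set in dimension `d+1`
(symmetric over the first `d` axes), with zero drift `A(1) = B(1)`:
`s_n ∼ S(1)^n n^{-(d+1)/2} S(1)^{(d+1)/2} / (π^{(d+1)/2} (b_1⋯b_{d+1})^{1/2})`. -/
theorem mostly_symmetric_zero_drift_asymptotics
    (d : ℕ) (S : Finset (Fin (d + 1) → ℤ)) (w : (Fin (d + 1) → ℤ) → ℝ)
    (hstep : ∀ i ∈ S, (∀ j, i j = -1 ∨ i j = 0 ∨ i j = 1) ∧ i ≠ 0)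
    (hw : ∀ i ∈ S, 0 < w i)
    (hsym : ∀ k : Fin d, SymmetricAxis (d + 1) S w (Fin.castSucc k))
    (hfwd : ∀ k : Fin (d + 1), ∃ i ∈ S, i k = 1)
    (hbwd : ∀ k : Fin (d + 1), ∃ i ∈ S, i k = -1)
    (hdrift : (∑ i ∈ S.filter fun i => i (Fin.last d) = -1, w i)
        = ∑ i ∈ S.filter fun i => i (Fin.last d) = 1, w i) :
    Tendsto (fun n : ℕ =>
      walkWeight (d + 1) S w n /
        ((∑ i ∈ S, w i) ^ n * (n : ℝ) ^ (-((d : ℝ) + 1) / 2) *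
          ((∑ i ∈ S, w i) ^ (((d : ℝ) + 1) / 2) /
            (Real.pi ^ (((d : ℝ) + 1) / 2) *
              Real.sqrt (∏ k : Fin (d + 1), ∑ i ∈ S.filter fun i => i k = 1, w i)))))
      atTop (nhds 1) := by
  exact mostly_symmetric_zero_drift_asymptotics_general (fun i hi => (hstep i hi).1)
    (fun i hi => (hw i hi).le) hsym (fun k => sum_pos (fun i hi => hw i (mem_filter.mp hi).1)
      (filter_nonempty_iff.mpr (hfwd k))) hdrift

end
end

section
/- For the unweighted two-dimensional step set S = {(-1,-1), (1,-1), (0,1)}, the number s_n of walks of length n taking steps in S, starting at the origin, and remaining in ℕ^2 satisfies: s_n ∼ (24√2/π) · (2√2)^n / n^2 along even n, and s_n ∼ (32/π) · (2√2)^n / n^2 along odd n. -/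
/-!
Each step changes the `y`-coordinate by `±1`, and the `x`-coordinate moves, again by `±1`, exactly
when `y` decreases. A quarter-plane walk of length `n` with `k` down-steps is therefore a pair of
one-dimensional nonnegative walks, one of length `n` with `k` down-steps and one of length `k`.
By the reflection principle there are `(n - 2k + 1) / (n - k + 1) * n.choose k` of the former and
`k.choose (k / 2)` of the latter.

Let `e = n - 2k` be the final height. For fixed `e`, Wallis' product shows that the `k`-th summand
is asymptotic to `(4√2 / π) * (e + 1) / √2 ^ e * (2√2) ^ n / n ^ 2`. Dominated convergence allows
summation over all `e ≡ n` modulo `2`, and `∑ (e + 1) / √2 ^ e` is `6` over the even `e` and `4√2`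
over the odd `e`.
-/

open Finset Filter
open scoped Classical Real

noncomputable section

/-- The number of walks of length `n` with steps in `S`, starting at the origin and
never leaving `ℕ^d` (all partial sums have nonnegative coordinates). -/
def numWalks (d : ℕ) (S : Finset (Fin d → ℤ)) (n : ℕ) : ℕ :=
  Finset.card (Finset.univ.filter fun f : Fin n → {i // i ∈ S} =>
    ∀ m : ℕ, m ≤ n → ∀ j : Fin d,
      0 ≤ ∑ k ∈ Finset.univ.filter (fun k : Fin n => (k : ℕ) < m), ((f k : Fin d → ℤ) j))

open scoped Topology

lemma tendsto_of_tendsto_even_of_tendsto_odd {α : Type*} {u : ℕ → α} {l : Filter α}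
    (even : Tendsto (fun m => u (2 * m)) atTop l)
    (odd : Tendsto (fun m => u (2 * m + 1)) atTop l) : Tendsto u atTop l := by
  intro s hs
  obtain ⟨M, hM⟩ := mem_atTop_sets.1 (even hs)
  obtain ⟨N, hN⟩ := mem_atTop_sets.1 (odd hs)
  refine mem_atTop_sets.2 ⟨2 * M + 2 * N, fun n hn => ?_⟩
  obtain ⟨m, rfl | rfl⟩ := n.even_or_odd'
  · exact hM m (by omega)
  · exact hN m (by omega)

lemma tendsto_sum_range_of_dominated_convergence {E : Type*} [NormedAddCommGroup E]
    [CompleteSpace E] {f : ℕ → ℕ → E} {g : ℕ → E} {bound : ℕ → ℝ} (h_sum : Summable bound)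
    (h_lim : ∀ j, Tendsto (f · j) atTop (𝓝 (g j))) (h_bound : ∀ m, ∀ j ≤ m, ‖f m j‖ ≤ bound j) :
    Tendsto (fun m => ∑ j ∈ range (m + 1), f m j) atTop (𝓝 (∑' j, g j)) := by
  let truncated (m j : ℕ) : E := if j ≤ m then f m j else 0
  have bound_nonneg (j : ℕ) : 0 ≤ bound j := (norm_nonneg _).trans (h_bound j j le_rfl)
  have tsum_truncated (m : ℕ) : ∑' j, truncated m j = ∑ j ∈ range (m + 1), f m j := by
    rw [tsum_eq_sum (s := range (m + 1)) fun j hj => if_neg (by grind)]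
    exact sum_congr rfl fun j hj => if_pos (by grind)
  refine (tendsto_tsum_of_dominated_convergence (f := truncated) h_sum (fun j => ?_)
    (.of_forall fun m j => ?_)).congr tsum_truncated
  · refine (h_lim j).congr' ?_
    filter_upwards [eventually_ge_atTop j] with m hm using (if_pos hm).symm
  · by_cases hj : j ≤ m
    · simpa [truncated, hj] using h_bound m j hj
    · simpa [truncated, hj] using bound_nonneg j

/-- The number of walks of length `n` with steps in `S` that start at `x` and never leave `ℕ^d`. -/
def numWalksFrom {d : ℕ} (S : Finset (Fin d → ℤ)) (n : ℕ) (x : Fin d → ℤ) : ℕ :=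
  #{f : Fin n → {i // i ∈ S} |
    ∀ m ≤ n, 0 ≤ x + ∑ k : Fin n with k.val < m, (f k : Fin d → ℤ)}

lemma numWalks_eq_numWalksFrom_zero (d : ℕ) (S : Finset (Fin d → ℤ)) (n : ℕ) :
    numWalks d S n = numWalksFrom S n 0 := by
  simp only [numWalks, numWalksFrom, zero_add, Pi.le_def, Finset.sum_apply, Pi.zero_apply]

section numWalksFrom

variable {d : ℕ} (S : Finset (Fin d → ℤ)) (n : ℕ) {x : Fin d → ℤ}

lemma numWalksFrom_of_not_nonneg (hx : ¬ 0 ≤ x) : numWalksFrom S n x = 0 := by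
  refine card_eq_zero.2 (filter_eq_empty_iff.2 fun f _ hf => hx ?_)
  simpa using hf 0 n.zero_le

lemma numWalksFrom_zero (hx : 0 ≤ x) : numWalksFrom S 0 x = 1 := by
  simp [numWalksFrom, hx]

lemma numWalksFrom_succ (hx : 0 ≤ x) :
    numWalksFrom S (n + 1) x = ∑ s ∈ S, numWalksFrom S n (x + s) := by
  have stays_cons (s : {i // i ∈ S}) (f : Fin n → {i // i ∈ S}) :
      (∀ m ≤ n + 1, 0 ≤ x + ∑ k : Fin (n + 1) with k.val < m,
          ((Fin.cons s f : Fin (n + 1) → {i // i ∈ S}) k : Fin d → ℤ)) ↔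
        ∀ m ≤ n, 0 ≤ x + s + ∑ k : Fin n with k.val < m, (f k : Fin d → ℤ) := by
    simp only [Finset.sum_filter, Fin.sum_univ_succ]
    refine ⟨fun h m hm => by simpa [add_assoc] using h (m + 1) (by omega), fun h m hm => ?_⟩
    cases m with
    | zero => simpa using hx
    | succ m => simpa [add_assoc] using h m (by omega)
  simp only [numWalksFrom, card_filter]
  rw [← (Fin.consEquiv fun _ => {i // i ∈ S}).sum_comp, Fintype.sum_prod_type,
    ← Finset.sum_coe_sort S]
  simp only [Fin.consEquiv_apply, stays_cons]

end numWalksFrom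

/-- The number of `±1`-walks of length `n` on `ℤ` that start at `a` and stay positive. -/
def positiveWalks : ℕ → ℕ → ℕ
  | _, 0 => 0
  | 0, _ + 1 => 1
  | n + 1, a + 1 => positiveWalks n a + positiveWalks n (a + 2)

/-- The number of `±1`-walks of length `n` on `ℤ` that start at `b`, stay positive and make
exactly `k` down-steps. -/
def ballotNumber : ℕ → ℕ → ℕ → ℕ
  | _, 0, _ => 0
  | 0, _ + 1, 0 => 1
  | 0, _ + 1, _ + 1 => 0
  | n + 1, b + 1, 0 => ballotNumber n (b + 2) 0
  | n + 1, b + 1, k + 1 => ballotNumber n (b + 2) (k + 1) + ballotNumber n b k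

@[simp]
lemma positiveWalks_start_zero (n : ℕ) : positiveWalks n 0 = 0 := by
  cases n <;> rfl

@[simp]
lemma ballotNumber_start_zero (n k : ℕ) : ballotNumber n 0 k = 0 := by
  cases n <;> rfl

-- By reflection, the left side counts the unrestricted walks with displacement in `(-a, a]`. For
-- each `i < a` exactly one of the displacements `-i` and `i + 1` has the parity of `n`, and it is
-- attained by `n.choose ((n + i + 1) / 2)` walks.
lemma positiveWalks_eq_sum_choose (n a : ℕ) :
    positiveWalks n a = ∑ i ∈ range a, n.choose ((n + i + 1) / 2) := by
  induction n generalizing a with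
  | zero =>
    cases a with
    | zero => rfl
    | succ a =>
      rw [sum_range_succ', sum_eq_zero fun i _ => Nat.choose_eq_zero_of_lt (by omega)]
      rfl
  | succ n ih =>
    cases a with
    | zero => rfl
    | succ a =>
      have pascal (i : ℕ) : (n + 1).choose ((n + 1 + i + 1) / 2) =
          n.choose ((n + i) / 2) + n.choose ((n + (i + 1) + 1) / 2) := by
        rw [show (n + 1 + i + 1) / 2 = (n + i) / 2 + 1 by omega, Nat.choose_succ_succ',
          show (n + (i + 1) + 1) / 2 = (n + i) / 2 + 1 by omega]
      have middle : n.choose (n / 2) = n.choose ((n + 1) / 2) :=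
        Nat.choose_symm_of_eq_add (by omega)
      rw [positiveWalks, ih, ih, sum_congr rfl fun i _ => pascal i, sum_add_distrib,
        sum_range_succ' _ a, sum_range_succ' _ (a + 1)]
      simp only [add_zero, middle, add_assoc]
      ring

lemma positiveWalks_one (n : ℕ) : positiveWalks n 1 = n.choose (n / 2) := by
  rw [positiveWalks_eq_sum_choose, sum_range_one]
  exact Nat.choose_symm_of_eq_add (by omega)

-- Reflecting the part before the first visit to `0` turns the walks that reach `0` into all walks
-- from `-b` with the same endpoint, and these make `n + b - k` up-steps.
lemma ballotNumber_add_choose {n b k : ℕ} (h : 2 * k ≤ n + b) :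
    ballotNumber n b k + n.choose (n + b - k) = n.choose k := by
  induction n generalizing b k with
  | zero =>
    match b, k with
    | 0, k => simp [show k = 0 by omega]
    | b + 1, 0 => simp [ballotNumber]
    | b + 1, k + 1 => simp [ballotNumber, Nat.choose_eq_zero_of_lt (show 0 < b - k by omega)]
  | succ n ih =>
    match b, k with
    | 0, k => simpa using Nat.choose_symm (show k ≤ n + 1 by omega)
    | b + 1, 0 => simpa [ballotNumber, Nat.choose_eq_zero_of_lt] using ih (b := b + 2) (k := 0)
    | b + 1, k + 1 =>
      have up := ih (b := b + 2) (k := k + 1) (by omega)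
      have down := ih (b := b) (k := k) (by omega)
      rw [show n + (b + 2) - (k + 1) = n + b - k + 1 by omega] at up
      rw [show n + 1 + (b + 1) - (k + 1) = n + b - k + 1 by omega, ballotNumber,
        Nat.choose_succ_succ', Nat.choose_succ_succ']
      omega

lemma ballotNumber_eq_zero_of_add_le {n b k : ℕ} (h : n + b ≤ 2 * k) : ballotNumber n b k = 0 := by
  induction n generalizing b k with
  | zero =>
    match b, k with
    | 0, _ => rfl
    | _ + 1, _ + 1 => rfl
  | succ n ih =>
    match b, k with
    | 0, _ => rfl
    | b + 1, k + 1 => rw [ballotNumber, ih (by omega), ih (by omega)]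

lemma ballotNumber_eq_zero_of_lt {n k : ℕ} (b : ℕ) (h : n < k) : ballotNumber n b k = 0 := by
  rcases le_total (n + b) (2 * k) with hk | hk
  · exact ballotNumber_eq_zero_of_add_le hk
  · have := ballotNumber_add_choose hk
    rw [Nat.choose_eq_zero_of_lt h] at this
    omega

lemma ballotNumber_one_mul {n k : ℕ} (h : 2 * k ≤ n) :
    (n - k + 1) * ballotNumber n 1 k = (n - 2 * k + 1) * n.choose k := by
  have reflection := ballotNumber_add_choose (n := n) (b := 1) (k := k) (by omega)
  have absorption := Nat.choose_succ_right_eq n (n - k)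
  rw [Nat.choose_symm (by omega), Nat.sub_sub_self (by omega)] at absorption
  rw [show n + 1 - k = n - k + 1 by omega] at reflection
  obtain ⟨c, rfl⟩ := Nat.exists_eq_add_of_le h
  rw [show 2 * k + c - k = k + c by omega] at *
  rw [show 2 * k + c - 2 * k = c by omega]
  zify at reflection absorption ⊢
  linear_combination (k + c + 1 : ℤ) * reflection - absorption

/-- The step set `{(-1,-1), (1,-1), (0,1)}`. -/
abbrev driftSteps : Finset (Fin 2 → ℤ) := {![-1, -1], ![1, -1], ![0, 1]}

lemma numWalksFrom_driftSteps_succ (n : ℕ) {x y : ℤ} (hx : 0 ≤ x) (hy : 0 ≤ y) :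
    numWalksFrom driftSteps (n + 1) ![x, y] =
      numWalksFrom driftSteps n ![x - 1, y - 1] + numWalksFrom driftSteps n ![x + 1, y - 1] +
        numWalksFrom driftSteps n ![x, y + 1] := by
  have hxy : (0 : Fin 2 → ℤ) ≤ ![x, y] := by simp [Pi.le_def, Fin.forall_fin_two, hx, hy]
  rw [numWalksFrom_succ _ _ hxy, sum_insert (by simp), sum_insert (by simp), sum_singleton]
  simp [sub_eq_add_neg, add_assoc]

lemma sum_ballotNumber_mul_positiveWalks_succ (n a b : ℕ) :
    ∑ k ∈ range (n + 2), ballotNumber (n + 1) (b + 1) k * positiveWalks k (a + 1) =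
      ∑ k ∈ range (n + 1), ballotNumber n b k * positiveWalks k a +
        ∑ k ∈ range (n + 1), ballotNumber n b k * positiveWalks k (a + 2) +
        ∑ k ∈ range (n + 1), ballotNumber n (b + 2) k * positiveWalks k (a + 1) := by
  have up_steps : ∑ k ∈ range (n + 1), ballotNumber n (b + 2) k * positiveWalks k (a + 1) =
      ∑ k ∈ range (n + 1), ballotNumber n (b + 2) (k + 1) * positiveWalks (k + 1) (a + 1) +
        ballotNumber n (b + 2) 0 * positiveWalks 0 (a + 1) := by
    rw [← sum_range_succ' (fun k => ballotNumber n (b + 2) k * positiveWalks k (a + 1)),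
      sum_range_succ _ (n + 1), ballotNumber_eq_zero_of_lt _ n.lt_succ_self, zero_mul, add_zero]
  rw [up_steps, sum_range_succ', ballotNumber]
  simp only [ballotNumber, positiveWalks, add_mul, mul_add, sum_add_distrib]
  ring

-- The `y`-coordinate is a `±1`-walk, and the `x`-coordinate moves, by `±1`, exactly at its
-- down-steps; the shift by one turns nonnegative coordinates into positive ones.
lemma numWalksFrom_driftSteps (n a b : ℕ) :
    numWalksFrom driftSteps n ![(a : ℤ) - 1, (b : ℤ) - 1] =
      ∑ k ∈ range (n + 1), ballotNumber n b k * positiveWalks k a := by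
  have outside {n : ℕ} {x y : ℤ} (h : x < 0 ∨ y < 0) : numWalksFrom driftSteps n ![x, y] = 0 :=
    numWalksFrom_of_not_nonneg _ _ fun hxy => h.elim (hxy 0).not_gt (hxy 1).not_gt
  induction n generalizing a b with
  | zero =>
    match a, b with
    | 0, b => simp [outside]
    | a + 1, 0 => simp [outside]
    | a + 1, b + 1 =>
      rw [numWalksFrom_zero _ (by simp [Pi.le_def, Fin.forall_fin_two])]
      simp [ballotNumber, positiveWalks]
  | succ n ih =>
    match a, b with
    | 0, b => simp [outside]
    | a + 1, 0 => simp [outside]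
    | a + 1, b + 1 =>
      rw [sum_ballotNumber_mul_positiveWalks_succ, ← ih, ← ih, ← ih,
        numWalksFrom_driftSteps_succ n (by simp) (by simp)]
      push_cast
      ring_nf

lemma numWalks_driftSteps (n : ℕ) :
    numWalks 2 driftSteps n = ∑ k ∈ range (n / 2 + 1), ballotNumber n 1 k * k.choose (k / 2) := by
  have origin : (0 : Fin 2 → ℤ) = ![((1 : ℕ) : ℤ) - 1, ((1 : ℕ) : ℤ) - 1] := by
    ext i; fin_cases i <;> rfl
  rw [numWalks_eq_numWalksFrom_zero, origin, numWalksFrom_driftSteps]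
  simp only [positiveWalks_one]
  refine (sum_subset (range_subset_range.2 (by omega)) fun k _ hk => ?_).symm
  rw [ballotNumber_eq_zero_of_add_le (by grind), zero_mul]

/-- The central binomial coefficient of row `n` divided by `2 ^ n / √(n + 1)`; with `n + 1` in
place of `n`, the even terms are Wallis products and the term at `0` does not vanish. -/
def normalizedMiddleChoose (n : ℕ) : ℝ :=
  n.choose (n / 2) * √(n + 1) / 2 ^ n

lemma normalizedMiddleChoose_nonneg (n : ℕ) : 0 ≤ normalizedMiddleChoose n := by
  unfold normalizedMiddleChoose
  positivity

lemma normalizedMiddleChoose_two_mul (m : ℕ) :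
    normalizedMiddleChoose (2 * m) = √(Real.Wallis.W m)⁻¹ := by
  have factorials : ((2 * m).choose m : ℝ) * (m.factorial * m.factorial) = (2 * m).factorial := by
    have := Nat.choose_mul_factorial_mul_factorial (show m ≤ 2 * m by omega)
    rw [show 2 * m - m = m by omega, mul_assoc] at this
    exact_mod_cast this
  have square : (Real.Wallis.W m)⁻¹ = (normalizedMiddleChoose (2 * m)) ^ 2 := by
    rw [Real.Wallis.W_eq_factorial_ratio, normalizedMiddleChoose, div_pow, mul_pow,
      Real.sq_sqrt (by positivity), ← factorials, Nat.mul_div_cancel_left m two_pos]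
    push_cast
    field_simp
    ring
  rw [square, Real.sqrt_sq (normalizedMiddleChoose_nonneg _)]

lemma normalizedMiddleChoose_two_mul_add_one (m : ℕ) :
    normalizedMiddleChoose (2 * m + 1) =
      normalizedMiddleChoose (2 * (m + 1)) * √((2 + 2 * m) / (3 + 2 * m)) := by
  have pascal : (2 * (m + 1)).choose (m + 1) = 2 * (2 * m + 1).choose m := by
    rw [show 2 * (m + 1) = 2 * m + 1 + 1 by ring, Nat.choose_succ_succ', Nat.choose_symm_half]
    ring
  rw [normalizedMiddleChoose, normalizedMiddleChoose, show (2 * m + 1) / 2 = m by omega,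
    Nat.mul_div_cancel_left _ two_pos, pascal, Real.sqrt_div (by positivity)]
  push_cast
  rw [show (2 : ℝ) * m + 1 + 1 = 2 + 2 * m by ring, show (2 : ℝ) * (m + 1) + 1 = 3 + 2 * m by ring]
  field_simp
  ring

lemma tendsto_normalizedMiddleChoose : Tendsto normalizedMiddleChoose atTop (𝓝 √(2 / π)) := by
  have even : Tendsto (fun m => normalizedMiddleChoose (2 * m)) atTop (𝓝 √(2 / π)) := by
    simp only [normalizedMiddleChoose_two_mul]
    rw [← inv_div]
    exact (Real.Wallis.tendsto_W_nhds_pi_div_two.inv₀ (by positivity)).sqrt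
  refine tendsto_of_tendsto_even_of_tendsto_odd even ?_
  have ratio := (tendsto_add_mul_div_add_mul_atTop_nhds (2 : ℝ) 3 2 two_ne_zero).sqrt
  simpa [normalizedMiddleChoose_two_mul_add_one] using
    (even.comp (tendsto_add_atTop_nat 1)).mul ratio

lemma tendsto_choose_sub_div_choose (r j : ℕ) :
    Tendsto (fun m : ℕ => ((2 * m + r).choose (m - j) / (2 * m + r).choose m : ℝ)) atTop (𝓝 1) := by
  induction j with
  | zero =>
    refine tendsto_const_nhds.congr fun m => ?_
    rw [Nat.sub_zero, div_self (Nat.cast_ne_zero.2 (Nat.choose_pos (by omega)).ne')]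
  | succ j ih =>
    have ratio := tendsto_add_mul_div_add_mul_atTop_nhds (-j : ℝ) (r + j + 1) 1 one_ne_zero
    have := ih.mul ratio
    rw [div_one, mul_one] at this
    refine this.congr' ?_
    filter_upwards [eventually_gt_atTop j] with m hm
    obtain ⟨c, rfl⟩ := Nat.exists_eq_add_of_lt hm
    have absorption := Nat.choose_succ_right_eq (2 * (j + c + 1) + r) c
    rw [show 2 * (j + c + 1) + r - c = r + 2 * j + 2 + c by omega] at absorption
    rw [show j + c + 1 - j = c + 1 by omega, show j + c + 1 - (j + 1) = c by omega]
    have absorption' : ((2 * (j + c + 1) + r).choose (c + 1) : ℝ) * (c + 1) =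
        (2 * (j + c + 1) + r).choose c * (r + 2 * j + 2 + c) := mod_cast absorption
    have row_pos : (0 : ℝ) < (2 * (j + c + 1) + r).choose (j + c + 1) :=
      Nat.cast_pos.2 (Nat.choose_pos (by omega))
    push_cast
    field_simp
    linear_combination absorption'

/-- The quotient of `n ^ 2 * ballotNumber n 1 k * k.choose (k / 2)` by its leading part
`(n - 2 * k + 1) * 2 ^ (n + k)`, split into factors that converge as `n → ∞` with
`n - 2 * k` fixed. -/
def ballotCorrection (n k : ℕ) : ℝ :=
  n / (n - k + 1) * √(n / (n + 1)) * √(n / (k + 1)) * (n.choose k / n.choose (n / 2)) *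
    normalizedMiddleChoose n * normalizedMiddleChoose k

lemma sq_mul_ballotNumber_mul_choose {n k : ℕ} (h : 2 * k ≤ n) :
    (n : ℝ) ^ 2 * (ballotNumber n 1 k * k.choose (k / 2)) =
      (n - 2 * k + 1) * 2 ^ (n + k) * ballotCorrection n k := by
  have ballot : ((n : ℝ) - k + 1) * ballotNumber n 1 k = (n - 2 * k + 1) * n.choose k := by
    have := congrArg (Nat.cast (R := ℝ)) (ballotNumber_one_mul h)
    push_cast [Nat.cast_sub h, Nat.cast_sub (show k ≤ n by omega)] at this
    exact this
  have hkn : 2 * (k : ℝ) ≤ n := mod_cast h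
  have : (0 : ℝ) ≤ k := k.cast_nonneg
  have denom_ne : (n : ℝ) - k + 1 ≠ 0 := by linarith
  have middle_ne : (n.choose (n / 2) : ℝ) ≠ 0 :=
    Nat.cast_ne_zero.2 (Nat.choose_pos (n.div_le_self 2)).ne'
  rw [← mul_div_cancel_left₀ (ballotNumber n 1 k : ℝ) denom_ne, ballot, ballotCorrection,
    normalizedMiddleChoose, normalizedMiddleChoose, Real.sqrt_div' _ (by positivity),
    Real.sqrt_div' _ (by positivity), pow_add]
  field_simp
  rw [Real.sq_sqrt (by positivity)]
  ring

lemma scaled_ballotNumber_mul_choose (e k : ℕ) :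
    ((2 * k + e : ℕ) : ℝ) ^ 2 * (ballotNumber (2 * k + e) 1 k * k.choose (k / 2)) /
        (2 * √2) ^ (2 * k + e) =
      (e + 1) / √2 ^ e * ballotCorrection (2 * k + e) k := by
  rw [sq_mul_ballotNumber_mul_choose (by omega), mul_pow, pow_add √2, pow_mul √2,
    Real.sq_sqrt two_pos.le, pow_add]
  push_cast
  field_simp
  ring

lemma ballotCorrection_nonneg {n k : ℕ} (h : k ≤ n) : 0 ≤ ballotCorrection n k := by
  have : (k : ℝ) ≤ n := mod_cast h
  have : (0 : ℝ) ≤ n - k + 1 := by linarith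
  unfold ballotCorrection normalizedMiddleChoose
  positivity

lemma exists_ballotCorrection_le :
    ∃ K, ∀ n k : ℕ, 2 * k ≤ n → ballotCorrection n k ≤ K * (n - 2 * k + 2) := by
  obtain ⟨C, hC⟩ := tendsto_normalizedMiddleChoose.bddAbove_range
  have le_C (n : ℕ) : normalizedMiddleChoose n ≤ C := hC ⟨n, rfl⟩
  refine ⟨2 * C ^ 2, fun n k h => ?_⟩
  have hkn : 2 * (k : ℝ) ≤ n := mod_cast h
  have hk : (0 : ℝ) ≤ k := k.cast_nonneg
  have up_factor : (n : ℝ) / (n - k + 1) ≤ 2 := by rw [div_le_iff₀ (by linarith)]; linarith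
  have row_factor : √((n : ℝ) / (n + 1)) ≤ 1 :=
    Real.sqrt_le_one.2 (div_le_one_of_le₀ (by linarith) (by linarith))
  have down_factor : √((n : ℝ) / (k + 1)) ≤ n - 2 * k + 2 := by
    rw [Real.sqrt_le_left (by linarith), div_le_iff₀ (by positivity)]
    nlinarith [mul_nonneg hk (sub_nonneg.2 hkn)]
  have choose_factor : (n.choose k : ℝ) / n.choose (n / 2) ≤ 1 :=
    div_le_one_of_le₀ (mod_cast Nat.choose_le_middle k n) (by positivity)
  calc ballotCorrection n k ≤ 2 * 1 * (n - 2 * k + 2) * 1 * C * C := by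
        unfold ballotCorrection
        have : (0 : ℝ) ≤ n - k + 1 := by linarith
        have := (normalizedMiddleChoose_nonneg 0).trans (le_C 0)
        gcongr <;> first | exact normalizedMiddleChoose_nonneg _ | exact le_C _
    _ = 2 * C ^ 2 * (n - 2 * k + 2) := by ring

lemma tendsto_ballotCorrection {r : ℕ} (hr : r ≤ 1) (j : ℕ) :
    Tendsto (fun m => ballotCorrection (2 * m + r) (m - j)) atTop (𝓝 (4 * √2 / π)) := by
  have row : Tendsto (fun m : ℕ => 2 * m + r) atTop atTop :=
    tendsto_atTop_mono (fun m => show m ≤ 2 * m + r by omega) tendsto_id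
  have up_factor := tendsto_add_mul_div_add_mul_atTop_nhds (r : ℝ) (r + j + 1) 2 one_ne_zero
  have row_factor := (tendsto_add_mul_div_add_mul_atTop_nhds (r : ℝ) (r + 1) 2 two_ne_zero).sqrt
  have down_factor := (tendsto_add_mul_div_add_mul_atTop_nhds (r : ℝ) (1 - j) 2 one_ne_zero).sqrt
  have middle := tendsto_normalizedMiddleChoose
  have limit : 2 / 1 * √(2 / 2) * √(2 / 1) * 1 * √(2 / π) * √(2 / π) = 4 * √2 / π := by
    rw [mul_assoc _ √(2 / π), Real.mul_self_sqrt (by positivity)]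
    norm_num
    ring
  rw [← limit]
  refine (((((up_factor.mul row_factor).mul down_factor).mul
    (tendsto_choose_sub_div_choose r j)).mul (middle.comp row)).mul
      (middle.comp (tendsto_sub_atTop_nat j))).congr' ?_
  filter_upwards [eventually_ge_atTop j] with m hm
  rw [ballotCorrection, show (2 * m + r) / 2 = m by omega]
  push_cast [Nat.cast_sub hm]
  simp only [Function.comp]
  congr 6 <;> ring

lemma summable_add_one_mul_add_two_div_sqrt_two_pow :
    Summable fun e : ℕ => ((e : ℝ) + 1) * (e + 2) / √2 ^ e := by
  have norm_lt_one : ‖(√2)⁻¹‖ < 1 := by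
    rw [norm_inv, Real.norm_of_nonneg (by positivity)]
    exact inv_lt_one_of_one_lt₀ Real.one_lt_sqrt_two
  refine (summable_descFactorial_mul_geometric_of_norm_lt_one 2 norm_lt_one).congr fun e => ?_
  simp only [Nat.descFactorial_succ, Nat.descFactorial_zero, mul_one, inv_pow, div_eq_mul_inv]
  push_cast [show e + 2 - 1 = e + 1 by omega]
  ring

lemma tsum_add_one_div_sqrt_two_pow (r : ℕ) :
    ∑' j : ℕ, (((2 * j + r : ℕ) : ℝ) + 1) / √2 ^ (2 * j + r) = (6 + 2 * r) / √2 ^ r := by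
  have norm_lt_one : ‖(1 / 2 : ℝ)‖ < 1 := by norm_num
  have h := ((hasSum_coe_mul_geometric_of_norm_lt_one norm_lt_one).mul_left 2).add
    ((hasSum_geometric_of_norm_lt_one norm_lt_one).mul_left (r + 1 : ℝ)) |>.div_const (√2 ^ r)
  have summand (j : ℕ) : (((2 * j + r : ℕ) : ℝ) + 1) / √2 ^ (2 * j + r) =
      (2 * (j * (1 / 2) ^ j) + (r + 1) * (1 / 2) ^ j) / √2 ^ r := by
    rw [pow_add, pow_mul, Real.sq_sqrt two_pos.le, one_div, inv_pow]
    push_cast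
    field_simp
    ring
  rw [tsum_congr summand, h.tsum_eq]
  norm_num
  ring

lemma numWalks_driftSteps_div {r : ℕ} (hr : r ≤ 1) (m : ℕ) :
    (numWalks 2 driftSteps (2 * m + r) : ℝ) /
        ((2 * √2) ^ (2 * m + r) / ((2 * m + r : ℕ) : ℝ) ^ 2) =
      ∑ j ∈ range (m + 1), (((2 * j + r : ℕ) : ℝ) + 1) / √2 ^ (2 * j + r) *
        ballotCorrection (2 * m + r) (m - j) := by
  rw [numWalks_driftSteps, show (2 * m + r) / 2 = m by omega, ← sum_flip, div_div_eq_mul_div,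
    mul_comm, Nat.cast_sum, mul_sum, sum_div]
  refine sum_congr rfl fun j hj => ?_
  have split : 2 * m + r = 2 * (m - j) + (2 * j + r) := by grind
  rw [split, Nat.cast_mul, scaled_ballotNumber_mul_choose]

lemma tendsto_numWalks_driftSteps_div {r : ℕ} (hr : r ≤ 1) :
    Tendsto (fun m : ℕ => (numWalks 2 driftSteps (2 * m + r) : ℝ) /
        ((2 * √2) ^ (2 * m + r) / ((2 * m + r : ℕ) : ℝ) ^ 2)) atTop
      (𝓝 ((6 + 2 * r) / √2 ^ r * (4 * √2 / π))) := by
  obtain ⟨K, hK⟩ := exists_ballotCorrection_le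
  have height_injective : Function.Injective fun j : ℕ => 2 * j + r := fun i j h => by grind
  have h_sum := (summable_add_one_mul_add_two_div_sqrt_two_pow.comp_injective
    height_injective).mul_left K
  simp only [numWalks_driftSteps_div hr]
  rw [← tsum_add_one_div_sqrt_two_pow, ← tsum_mul_right]
  refine tendsto_sum_range_of_dominated_convergence h_sum
    (fun j => (tendsto_ballotCorrection hr j).const_mul _) fun m j hj => ?_
  have bound := hK (2 * m + r) (m - j) (by omega)
  have height : ((2 * m + r : ℕ) : ℝ) - 2 * (m - j : ℕ) = (2 * j + r : ℕ) := by
    push_cast [Nat.cast_sub hj]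
    ring
  rw [height] at bound
  have nonneg := ballotCorrection_nonneg (show m - j ≤ 2 * m + r by omega)
  rw [Real.norm_of_nonneg (by positivity), Function.comp_apply]
  calc _ ≤ (((2 * j + r : ℕ) : ℝ) + 1) / √2 ^ (2 * j + r) * (K * ((2 * j + r : ℕ) + 2)) := by gcongr
    _ = _ := by ring

/-- For the step set `{(-1,-1), (1,-1), (0,1)}` in `ℤ²`, the number of quarter-plane
walks satisfies `s_n ∼ (24√2/π)(2√2)^n/n²` along even `n` and
`s_n ∼ (32/π)(2√2)^n/n²` along odd `n`. -/
theorem negative_drift_example_asymptotics :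
    Tendsto (fun k : ℕ =>
      (numWalks 2 ({![-1, -1], ![1, -1], ![0, 1]} : Finset (Fin 2 → ℤ)) (2 * k) : ℝ) /
        ((24 * Real.sqrt 2 / π) * (2 * Real.sqrt 2) ^ (2 * k) / ((2 * k : ℕ) : ℝ) ^ 2))
      atTop (nhds 1) ∧
    Tendsto (fun k : ℕ =>
      (numWalks 2 ({![-1, -1], ![1, -1], ![0, 1]} : Finset (Fin 2 → ℤ)) (2 * k + 1) : ℝ) /
        ((32 / π) * (2 * Real.sqrt 2) ^ (2 * k + 1) / ((2 * k + 1 : ℕ) : ℝ) ^ 2))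
      atTop (nhds 1) := by
  have along (r : ℕ) (hr : r ≤ 1) {C : ℝ} (hC : (6 + 2 * r) / √2 ^ r * (4 * √2 / π) = C)
      (hC_ne : C ≠ 0) : Tendsto (fun k : ℕ => (numWalks 2 driftSteps (2 * k + r) : ℝ) /
        (C * (2 * √2) ^ (2 * k + r) / ((2 * k + r : ℕ) : ℝ) ^ 2)) atTop (𝓝 1) := by
    have h := (tendsto_numWalks_driftSteps_div hr).div_const C
    rw [hC, div_self hC_ne] at h
    exact h.congr fun k => by rw [mul_div_assoc, div_mul_eq_div_div_swap]
  refine ⟨along 0 zero_le_one ?_ (by positivity), along 1 le_rfl ?_ (by positivity)⟩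
  · norm_num
    ring
  · field_simp
    norm_num

end
end
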